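/- arXiv:2409.20240 — 2 statements merged into one kernel-verified Lean document; each statement's English description precedes it below -/
import Mathlib

section
/- Let Γ be a group and let φ₁, φ₂ : Γ → GL_n(ℂ) be group homomorphisms whose associated representations of Γ on ℂⁿ are semisimple (ℂⁿ is a semisimple ℂ[Γ]-module under each action). If φ₁(γ) and φ₂(γ) are conjugate in GL_n(ℂ) for every γ ∈ Γ, then there exists g ∈ GL_n(ℂ) with φ₂(γ) = g φ₁(γ) g⁻¹ for all γ ∈ Γ. -/
noncomputable section

/-- The representation of `Γ` on `ℂⁿ = Fin n → ℂ` associated to a homomorphism of `Γ` into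
the multiplicative monoid of `n × n` complex matrices (matrices acting by `Matrix.toLin'`). -/
def matRep {n : ℕ} {Γ : Type} [Group Γ] (φ : Γ →* Matrix (Fin n) (Fin n) ℂ) :
    Representation ℂ Γ (Fin n → ℂ) :=
  (Matrix.toLinAlgEquiv' : Matrix (Fin n) (Fin n) ℂ ≃ₐ[ℂ] _).toAlgHom.toRingHom.toMonoidHom.comp φ

section Helpers

variable {k A : Type*} [Field k] [CharZero k] [Ring A] [Algebra k A]

/-- trace of an algebra element on a module -/
def trc (k : Type*) {A : Type*} [Field k] [Ring A] [Algebra k A] (M : Type*)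
    [AddCommGroup M] [Module k M] [Module A M] [IsScalarTower k A M] (a : A) : k :=
  LinearMap.trace k M (Algebra.lsmul k k M a)

theorem trc_equiv {M N : Type*} [AddCommGroup M] [Module k M] [Module A M] [IsScalarTower k A M]
    [AddCommGroup N] [Module k N] [Module A N] [IsScalarTower k A N] (e : M ≃ₗ[A] N) (a : A) :
    trc k M a = trc k N a := by
  unfold trc
  rw [← LinearMap.trace_conj' _ (e.restrictScalars k)]
  congr 1
  ext x
  simp [LinearEquiv.conj_apply]

theorem trc_prod {M N : Type*} [AddCommGroup M] [Module k M] [Module A M] [IsScalarTower k A M]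
    [AddCommGroup N] [Module k N] [Module A N] [IsScalarTower k A N]
    [Module.Finite k M] [Module.Finite k N] (a : A) :
    trc k (M × N) a = trc k M a + trc k N a := by
  unfold trc
  rw [← LinearMap.trace_prodMap']
  congr 1

theorem sub_finite {M : Type*} [AddCommGroup M] [Module k M] [Module A M] [IsScalarTower k A M]
    [Module.Finite k M] (K : Submodule A M) : Module.Finite k K :=
  Module.Finite.of_injective (K.subtype.restrictScalars k) K.subtype_injective

theorem disjoint_case {M N : Type*}
    [AddCommGroup M] [Module k M] [Module A M] [IsScalarTower k A M]
    [AddCommGroup N] [Module k N] [Module A N] [IsScalarTower k A N]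
    [Module.Finite k M] [Module.Finite k N]
    [IsSemisimpleModule A M] [IsSemisimpleModule A N]
    (h : ∀ a : A, trc k M a = trc k N a)
    (h1 : ∀ f : M →ₗ[A] N, f = 0) (h2 : ∀ f : N →ₗ[A] M, f = 0) : Module.finrank k M = 0 := by
  have hss : IsSemisimpleModule A (M × N) := by
    have ht : IsSemisimpleModule A (⊤ : Submodule A (M × N)) := by
      rw [← LinearMap.sup_range_inl_inr]
      exact .sup (.range _) (.range _)
    exact IsSemisimpleModule.congr (Submodule.topEquiv (R := A) (M := M × N)).symm
  let F : Module.End (Module.End A (M × N)) (M × N) :=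
    { toFun := fun p => (p.1, 0)
      map_add' := by intro x y; simp
      map_smul' := by
        intro g p
        have e1 : (LinearMap.fst A M N ∘ₗ g ∘ₗ LinearMap.inr A M N) p.2 = 0 := by
          exact congrArg (fun f : N →ₗ[A] M => f p.2) (h2 _)
        have e2 : (LinearMap.snd A M N ∘ₗ g ∘ₗ LinearMap.inl A M N) p.1 = 0 := by
          exact congrArg (fun f : M →ₗ[A] N => f p.1) (h1 _)
        have e3 : g p = g (p.1, 0) + g (0, p.2) := by rw [← map_add]; simp
        simp at e1 e2
        ext
        · simp [e3, e1]
        · simp [e2] }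
  obtain ⟨s, hs⟩ := (inferInstance : Module.Finite k (M × N)).fg_top
  obtain ⟨r, hr⟩ := jacobson_density F s
  have key : ∀ p : M × N, r • p = (p.1, 0) := by
    intro p
    have hp : p ∈ Submodule.span k (s : Set (M × N)) := by rw [hs]; trivial
    induction hp using Submodule.span_induction with
    | mem x hx => exact (hr x hx).symm
    | zero => rw [smul_zero]; rfl
    | add x y _ _ hx hy => rw [smul_add, hx, hy]; simp
    | smul c x _ hx =>
      have : SMulCommClass A k (M × N) := IsScalarTower.to_smulCommClass'
      rw [smul_comm, hx]; ext <;> simp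
  have t1 : trc k M r = Module.finrank k M := by
    unfold trc
    rw [← LinearMap.trace_id]
    congr 1
    ext x
    simpa using congrArg Prod.fst (key (x, 0))
  have t2 : trc k N r = 0 := by
    unfold trc
    rw [← map_zero (LinearMap.trace k N)]
    congr 1
    ext x
    simpa using congrArg Prod.snd (key (0, x))
  have := h r
  rw [t1, t2] at this
  exact_mod_cast this

theorem main_iso (d : ℕ) : ∀ {M N : Type} 
    [AddCommGroup M] [Module k M] [Module A M] [IsScalarTower k A M]
    [AddCommGroup N] [Module k N] [Module A N] [IsScalarTower k A N]
    [Module.Finite k M] [Module.Finite k N]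
    [IsSemisimpleModule A M] [IsSemisimpleModule A N]
    (_ : Module.finrank k M ≤ d)
    (_ : ∀ a : A, trc k M a = trc k N a), Nonempty (M ≃ₗ[A] N) := by
  induction d with
  | zero =>
    intro M N _ _ _ _ _ _ _ _ _ _ _ _ hd h
    have e := h 1
    simp only [trc, map_one, LinearMap.trace_one] at e
    have e' : Module.finrank k M = Module.finrank k N := by exact_mod_cast e
    have s1 : Subsingleton M := Module.finrank_zero_iff (R := k).1 (by omega)
    have s2 : Subsingleton N := Module.finrank_zero_iff (R := k).1 (by omega)
    exact ⟨0⟩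
  | succ d ih =>
    have step : ∀ {M N : Type} 
        [AddCommGroup M] [Module k M] [Module A M] [IsScalarTower k A M]
        [AddCommGroup N] [Module k N] [Module A N] [IsScalarTower k A N]
        [Module.Finite k M] [Module.Finite k N]
        [IsSemisimpleModule A M] [IsSemisimpleModule A N]
        (_ : Module.finrank k M ≤ d + 1)
        (_ : ∀ a : A, trc k M a = trc k N a) (f : M →ₗ[A] N) (_ : f ≠ 0),
        Nonempty (M ≃ₗ[A] N) := by
      intro M N _ _ _ _ _ _ _ _ _ _ _ _ hd h f hf
      obtain ⟨K, hK⟩ := exists_isCompl f.ker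
      obtain ⟨C, hC⟩ := exists_isCompl f.range
      have i1 := sub_finite (k := k) f.ker
      have i2 := sub_finite (k := k) f.range
      have i3 := sub_finite (k := k) C
      have i4 := sub_finite (k := k) K
      let e0 : K ≃ₗ[A] f.range :=
        (Submodule.quotientEquivOfIsCompl f.ker K hK).symm.trans f.quotKerEquivRange
      let eM : (f.ker × f.range) ≃ₗ[A] M :=
        ((LinearEquiv.refl A f.ker).prodCongr e0.symm).trans (Submodule.prodEquivOfIsCompl _ _ hK)
      let eN : (C × f.range) ≃ₗ[A] N := Submodule.prodEquivOfIsCompl _ _ hC.symm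
      have hpos : 0 < Module.finrank k f.range := by
        have : Nontrivial f.range := by
          rw [Submodule.nontrivial_iff_ne_bot]
          rwa [Ne, LinearMap.range_eq_bot]
        exact Module.finrank_pos
      have hdim := (eM.restrictScalars k).finrank_eq
      rw [Module.finrank_prod] at hdim
      obtain ⟨e⟩ := ih (M := f.ker) (N := C) (by omega) (by
        intro a
        have := h a
        rw [← trc_equiv eM, ← trc_equiv eN, trc_prod, trc_prod] at this
        exact add_right_cancel this)
      exact ⟨eM.symm.trans ((e.prodCongr (LinearEquiv.refl A f.range)).trans eN)⟩
    intro M N _ _ _ _ _ _ _ _ _ _ _ _ hd h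
    have e := h 1
    simp only [trc, map_one, LinearMap.trace_one] at e
    have e' : Module.finrank k M = Module.finrank k N := by exact_mod_cast e
    by_cases c1 : ∀ f : M →ₗ[A] N, f = 0
    · by_cases c2 : ∀ f : N →ₗ[A] M, f = 0
      · exact ih (by rw [disjoint_case h c1 c2]; omega) h
      · push Not at c2
        obtain ⟨f, hf⟩ := c2
        obtain ⟨e⟩ := step (by omega) (fun a => (h a).symm) f hf
        exact ⟨e.symm⟩
    · push Not at c1
      obtain ⟨f, hf⟩ := c1
      exact step hd h f hf

end Helpers

/-- Pointwise conjugate semisimple representations `Γ → GL_n(ℂ)` are globally conjugate.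
Homomorphisms `Γ → GL_n(ℂ)` are encoded as monoid homomorphisms into the multiplicative
monoid of matrices (a monoid homomorphism from a group automatically lands in `GL_n(ℂ)`),
and semisimplicity as semisimplicity of `ℂⁿ` as a module over `ℂ[Γ]`. -/
theorem statement9 (n : ℕ) (Γ : Type) [Group Γ]
    (φ₁ φ₂ : Γ →* Matrix (Fin n) (Fin n) ℂ)
    (h1 : IsSemisimpleModule (MonoidAlgebra ℂ Γ) (matRep φ₁).asModule)
    (h2 : IsSemisimpleModule (MonoidAlgebra ℂ Γ) (matRep φ₂).asModule)
    (hloc : ∀ γ : Γ, ∃ g : Matrix (Fin n) (Fin n) ℂ, IsUnit g ∧ φ₂ γ = g * φ₁ γ * g⁻¹) :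
    ∃ g : Matrix (Fin n) (Fin n) ℂ, IsUnit g ∧ ∀ γ : Γ, φ₂ γ = g * φ₁ γ * g⁻¹ := by
  have htr : ∀ a : MonoidAlgebra ℂ Γ, trc ℂ (matRep φ₁).asModule a = trc ℂ (matRep φ₂).asModule a := by
    have key : ∀ (φ : Γ →* Matrix (Fin n) (Fin n) ℂ) (g : Γ),
        trc ℂ (matRep φ).asModule (MonoidAlgebra.of ℂ Γ g) = (φ g).trace := by
      intro φ g
      rw [← Matrix.trace_toLin'_eq]
      unfold trc
      rw [← LinearMap.trace_conj' _ (matRep φ).asModuleEquiv]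
      congr 1
      apply LinearMap.ext
      intro x
      rw [LinearEquiv.conj_apply_apply, Algebra.lsmul_coe, Representation.asModuleEquiv_map_smul,
        Representation.asAlgebraHom_of, LinearEquiv.apply_symm_apply]
      rfl
    intro a
    induction a using MonoidAlgebra.induction_on with
    | of g =>
      rw [key, key]
      obtain ⟨u, hu, h⟩ := hloc g
      rw [h, Matrix.trace_mul_cycle, Matrix.nonsing_inv_mul _ ((Matrix.isUnit_iff_isUnit_det _).1 hu),
        one_mul]
    | add x y hx hy =>
      unfold trc at *
      simp only [map_add, hx, hy]
    | smul r x hx =>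
      unfold trc at *
      simp only [map_smul, hx]
  obtain ⟨e⟩ := main_iso (k := ℂ) (A := MonoidAlgebra ℂ Γ) _ le_rfl htr
  let e' : (Fin n → ℂ) ≃ₗ[ℂ] (Fin n → ℂ) :=
    ((matRep φ₁).asModuleEquiv.symm.trans (e.restrictScalars ℂ)).trans (matRep φ₂).asModuleEquiv
  have hcomm : ∀ (γ : Γ) (x : Fin n → ℂ), e' (Matrix.toLin' (φ₁ γ) x) = Matrix.toLin' (φ₂ γ) (e' x) := by
    intro γ x
    have := e.map_smul (MonoidAlgebra.of ℂ Γ γ) ((matRep φ₁).asModuleEquiv.symm x)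
    rw [← Representation.asModuleEquiv_symm_map_rho] at this
    have h2 := congrArg (matRep φ₂).asModuleEquiv this
    rw [Representation.asModuleEquiv_map_smul, Representation.asAlgebraHom_of] at h2
    exact h2
  let G := LinearMap.toMatrix' (e' : (Fin n → ℂ) →ₗ[ℂ] (Fin n → ℂ))
  let G' := LinearMap.toMatrix' (e'.symm : (Fin n → ℂ) →ₗ[ℂ] (Fin n → ℂ))
  have hG : G * G' = 1 := by
    simp only [G, G']
    rw [← LinearMap.toMatrix'_comp]
    simp
  have hinv : G⁻¹ = G' := Matrix.inv_eq_right_inv hG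
  refine ⟨G, IsUnit.of_mul_eq_one _ hG, fun γ => ?_⟩
  have hc : G * φ₁ γ = φ₂ γ * G := by
    apply Matrix.toLin'.injective
    rw [Matrix.toLin'_mul, Matrix.toLin'_mul]
    apply LinearMap.ext
    intro x
    simpa only [G, Matrix.toLin'_toMatrix', LinearMap.comp_apply, LinearEquiv.coe_coe] using hcomm γ x
  rw [hinv, hc, mul_assoc, hG, mul_one]

end
end

section
/- For every n ≥ 1, the complex odd special orthogonal group SO_{2n+1}(ℂ) := {M ∈ GL_{2n+1}(ℂ) : Mᵀ M = 1 and det M = 1} is acceptable: for every finite group Γ and homomorphisms φ, φ' : Γ → SO_{2n+1}(ℂ) that are pointwise conjugate in SO_{2n+1}(ℂ), there exists g ∈ SO_{2n+1}(ℂ) conjugating φ to φ'. -/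
open Matrix

noncomputable section

/-- Membership in `SO_m(ℂ) = {M ∈ GL_m(ℂ) : Mᵀ M = 1 and det M = 1}`. -/
def memSO (m : ℕ) (g : Matrix (Fin m) (Fin m) ℂ) : Prop :=
  gᵀ * g = 1 ∧ g.det = 1

open Polynomial

section RepPart

open Module

theorem aux_finite_hom {k A : Type} [Field k] [Ring A] [Algebra k A]
    (U V : Type) [AddCommGroup U] [Module k U] [Module A U] [IsScalarTower k A U]
    [FiniteDimensional k U]
    [AddCommGroup V] [Module k V] [Module A V] [IsScalarTower k A V] [FiniteDimensional k V] :
    FiniteDimensional k (U →ₗ[A] V) := by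
  let f : (U →ₗ[A] V) →ₗ[k] (U →ₗ[k] V) :=
    { toFun := fun g => g.restrictScalars k
      map_add' := fun _ _ => rfl
      map_smul' := fun _ _ => rfl }
  exact FiniteDimensional.of_injective f (LinearMap.restrictScalars_injective k)

theorem aux_finrank_prod {k A : Type} [Field k] [Ring A] [Algebra k A]
    (U V S T : Type) [AddCommGroup U] [Module k U] [Module A U] [IsScalarTower k A U]
    [FiniteDimensional k U]
    [AddCommGroup V] [Module k V] [Module A V] [IsScalarTower k A V]
    [AddCommGroup S] [Module k S] [Module A S] [IsScalarTower k A S] [FiniteDimensional k S]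
    [AddCommGroup T] [Module k T] [Module A T] [IsScalarTower k A T] [FiniteDimensional k T]
    (e : (S × T) ≃ₗ[A] V) :
    finrank k (U →ₗ[A] V) = finrank k (U →ₗ[A] S) + finrank k (U →ₗ[A] T) := by
  have := aux_finite_hom (k := k) (A := A) U S
  have := aux_finite_hom (k := k) (A := A) U T
  rw [← finrank_prod]
  have e1 : (U →ₗ[A] (S × T)) ≃ₗ[k] (U →ₗ[A] V) :=
    { toFun := fun g => e.toLinearMap ∘ₗ g
      invFun := fun g => e.symm.toLinearMap ∘ₗ g
      map_add' := fun _ _ => by ext; simp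
      map_smul' := fun c g => by
        ext x
        exact (e.toLinearMap.restrictScalars k).map_smul c (g x)
      left_inv := fun g => by ext x <;> simp
      right_inv := fun g => by ext x; simp }
  exact ((LinearMap.prodEquiv k).trans e1).finrank_eq.symm

theorem aux_iso {k A : Type} [Field k] [Ring A] [Algebra k A] [IsSemisimpleRing A] (d : ℕ) :
    ∀ (V W : Type) [AddCommGroup V] [Module k V] [Module A V] [IsScalarTower k A V]
    [FiniteDimensional k V]
    [AddCommGroup W] [Module k W] [Module A W] [IsScalarTower k A W] [FiniteDimensional k W],
    finrank k V = d →
    (∀ (U : Type) [AddCommGroup U] [Module k U] [Module A U] [IsScalarTower k A U]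
      [FiniteDimensional k U], finrank k (U →ₗ[A] V) = finrank k (U →ₗ[A] W)) →
    Nonempty (V ≃ₗ[A] W) := by
  induction d using Nat.strong_induction_on with
  | _ d ih =>
  intro V W _ _ _ _ _ _ _ _ _ _ hd H
  rcases subsingleton_or_nontrivial V with hV | hV
  · have h := H W
    have := aux_finite_hom (k := k) (A := A) W W
    rw [finrank_zero_of_subsingleton] at h
    have h2 := (finrank_zero_iff_forall_zero.mp h.symm) LinearMap.id
    have hW : Subsingleton W := subsingleton_of_forall_eq 0 fun w => by
      simpa using LinearMap.congr_fun h2 w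
    exact ⟨LinearEquiv.ofSubsingleton V W⟩
  · obtain ⟨S, hS⟩ := IsSemisimpleModule.exists_simple_submodule A V
    have : FiniteDimensional k S :=
      FiniteDimensional.of_injective (S.subtype.restrictScalars k) S.injective_subtype
    have hne : ∃ f : S →ₗ[A] W, f ≠ 0 := by
      by_contra! hc
      have h := H S
      have := aux_finite_hom (k := k) (A := A) S V
      have := aux_finite_hom (k := k) (A := A) S W
      rw [finrank_zero_iff_forall_zero.mpr hc] at h
      have h2 := (finrank_zero_iff_forall_zero.mp h) S.subtype
      have := IsSimpleModule.nontrivial A S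
      obtain ⟨x, hx⟩ := exists_ne (0 : S)
      exact hx (Subtype.ext (by simpa using LinearMap.congr_fun h2 x))
    obtain ⟨f, hf⟩ := hne
    have hinj : Function.Injective f := (LinearMap.injective_or_eq_zero f).resolve_right hf
    obtain ⟨T, hT⟩ := exists_isCompl S
    obtain ⟨T', hT'⟩ := exists_isCompl (LinearMap.range f)
    have : FiniteDimensional k T :=
      FiniteDimensional.of_injective (T.subtype.restrictScalars k) T.injective_subtype
    have : FiniteDimensional k T' :=
      FiniteDimensional.of_injective (T'.subtype.restrictScalars k) T'.injective_subtype
    let e1 : (S × T) ≃ₗ[A] V := Submodule.prodEquivOfIsCompl S T hT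
    let e2 : (S × T') ≃ₗ[A] W :=
      ((LinearEquiv.ofInjective f hinj).prodCongr (LinearEquiv.refl A T')).trans
        (Submodule.prodEquivOfIsCompl _ T' hT')
    have hlt : finrank k T < d := by
      rw [← hd, ← (e1.restrictScalars k).finrank_eq, finrank_prod]
      have := IsSimpleModule.nontrivial A S
      have : 0 < finrank k S := finrank_pos
      omega
    obtain ⟨e3⟩ := ih _ hlt T T' rfl (fun U _ _ _ _ _ => by
      have h := H U
      rw [aux_finrank_prod U V S T e1, aux_finrank_prod U W S T' e2] at h
      omega)
    exact ⟨e1.symm.trans (((LinearEquiv.refl A S).prodCongr e3).trans e2)⟩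

open scoped MonoidAlgebra in
theorem aux_finrank_char {Γ : Type} [Group Γ] [Fintype Γ]
    (U V : Type) [AddCommGroup U] [Module ℂ U] [Module ℂ[Γ] U] [IsScalarTower ℂ ℂ[Γ] U]
    [FiniteDimensional ℂ U]
    [AddCommGroup V] [Module ℂ V] [Module ℂ[Γ] V] [IsScalarTower ℂ ℂ[Γ] V]
    [FiniteDimensional ℂ V] :
    (Nat.card Γ : ℂ)⁻¹ * ∑ g : Γ, (Representation.ofModule' (k := ℂ) (G := Γ) V).character g *
      (Representation.ofModule' (k := ℂ) (G := Γ) U).character g⁻¹ =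
      finrank ℂ (U →ₗ[ℂ[Γ]] V) := by
  have : Invertible (Nat.card Γ : ℂ) := invertibleOfNonzero (by simp)
  rw [Representation.card_inv_mul_sum_char_mul_char_eq_finrank]
  congr 1
  have hU : ∀ (g : Γ) (u : U), Representation.ofModule' (k := ℂ) (G := Γ) U g u =
      MonoidAlgebra.single g (1 : ℂ) • u := fun g u => by
    simp [Representation.ofModule']
  have hV : ∀ (g : Γ) (u : V), Representation.ofModule' (k := ℂ) (G := Γ) V g u =
      MonoidAlgebra.single g (1 : ℂ) • u := fun g u => by
    simp [Representation.ofModule']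
  refine LinearEquiv.finrank_eq
    { toFun := fun f => MonoidAlgebra.equivariantOfLinearOfComm f.toLinearMap (fun g v => by
        rw [← hU, ← hV]; exact f.isIntertwining _ _ g v)
      invFun := fun f => ⟨f.restrictScalars ℂ, fun g => by
        ext v
        simp [hU, hV]⟩
      map_add' := fun _ _ => by ext; simp
      map_smul' := fun _ _ => by ext; simp
      left_inv := fun f => by ext; simp
      right_inv := fun f => by ext; simp }

open scoped MonoidAlgebra in
theorem aux_rep {Γ : Type} [Group Γ] [Finite Γ] {V W : Type} [AddCommGroup V] [Module ℂ V]
    [FiniteDimensional ℂ V] [AddCommGroup W] [Module ℂ W] [FiniteDimensional ℂ W]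
    (ρ : Representation ℂ Γ V) (σ : Representation ℂ Γ W)
    (h : ∀ g, LinearMap.trace ℂ V (ρ g) = LinearMap.trace ℂ W (σ g)) :
    ∃ e : V ≃ₗ[ℂ] W, ∀ g v, e (ρ g v) = σ g (e v) := by
  have := Fintype.ofFinite Γ
  have : NeZero (Nat.card Γ : ℂ) := ⟨by simp⟩
  have key : Nonempty (ρ.asModule ≃ₗ[ℂ[Γ]] σ.asModule) := by
    refine aux_iso (k := ℂ) _ ρ.asModule σ.asModule rfl ?_
    intro U _ _ _ _ _
    have h1 := aux_finrank_char (Γ := Γ) U ρ.asModule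
    have h2 := aux_finrank_char (Γ := Γ) U σ.asModule
    have hc : ∀ g, (Representation.ofModule' (k := ℂ) (G := Γ) ρ.asModule).character g =
        (Representation.ofModule' (k := ℂ) (G := Γ) σ.asModule).character g := by
      intro g
      have hr : Representation.ofModule' (k := ℂ) (G := Γ) ρ.asModule g = ρ g := by
        refine LinearMap.ext fun v => ?_
        simp [Representation.ofModule']
        rfl
      have hs : Representation.ofModule' (k := ℂ) (G := Γ) σ.asModule g = σ g := by
        refine LinearMap.ext fun v => ?_
        simp [Representation.ofModule']
        rfl
      unfold Representation.character
      rw [hr, hs]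
      exact h g
    simp only [hc] at h1
    exact_mod_cast h1.symm.trans h2
  obtain ⟨e⟩ := key
  refine ⟨ρ.asModuleEquiv.symm.trans ((e.restrictScalars ℂ).trans σ.asModuleEquiv), fun g v => ?_⟩
  have h1 : e (ρ.asModuleEquiv.symm (ρ g v)) =
      MonoidAlgebra.of ℂ Γ g • e (ρ.asModuleEquiv.symm v) := by
    rw [Representation.asModuleEquiv_symm_map_rho, map_smul]
  have h2 := congrArg σ.asModuleEquiv h1
  rw [Representation.asModuleEquiv_map_smul, Representation.asAlgebraHom_of] at h2
  exact h2

end RepPart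

theorem aux_sqrt_poly (s : Multiset ℂ) (hs : ∀ a ∈ s, a ≠ 0) :
    ∃ q : ℂ[X], (s.map fun a => X - C a).prod ∣ q ^ 2 - X := by
  induction s using Multiset.induction_on with
  | empty => exact ⟨0, by simp⟩
  | cons a s ih =>
    obtain ⟨q, r, hr⟩ := ih fun b hb => hs b (Multiset.mem_cons_of_mem hb)
    set χ := (s.map fun a => X - C a).prod
    have ha : a ≠ 0 := hs a (Multiset.mem_cons_self a s)
    have : ∃ c : ℂ, r.eval a + 2 * q.eval a * c + χ.eval a * c ^ 2 = 0 := by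
      by_cases hχ : χ.eval a = 0
      · have h1 := congrArg (Polynomial.eval a) hr
        simp [hχ] at h1
        have hq : q.eval a ≠ 0 := by
          intro h0
          rw [h0] at h1
          apply ha
          linear_combination -h1
        refine ⟨-(r.eval a) / (2 * q.eval a), ?_⟩
        rw [hχ]
        field_simp
        ring
      · obtain ⟨c, hc⟩ := exists_quadratic_eq_zero (a := χ.eval a) (b := 2 * q.eval a)
          (c := r.eval a) hχ (IsAlgClosed.exists_eq_mul_self _)
        exact ⟨c, by linear_combination hc⟩
    obtain ⟨c, hc⟩ := this
    have hd : (X - C a) ∣ (r + 2 * q * C c + χ * C c ^ 2) := by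
      rw [dvd_iff_isRoot]
      simpa [IsRoot] using hc
    obtain ⟨t, ht⟩ := hd
    refine ⟨q + χ * C c, t, ?_⟩
    rw [Multiset.map_cons, Multiset.prod_cons]
    linear_combination hr + χ * ht

theorem aux_sqrt {m : ℕ} (S : Matrix (Fin m) (Fin m) ℂ) (hS : IsUnit S.det) :
    ∃ q : ℂ[X], aeval S q * aeval S q = S := by
  obtain ⟨q, hq⟩ := aux_sqrt_poly S.charpoly.roots (by
    rintro a ha rfl
    have h1 := Polynomial.isRoot_of_mem_roots ha
    rw [← Matrix.mem_spectrum_iff_isRoot_charpoly] at h1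
    exact (spectrum.zero_notMem_iff ℂ).mpr ((Matrix.isUnit_iff_isUnit_det S).mpr hS) h1)
  refine ⟨q, ?_⟩
  rw [← (IsAlgClosed.splits S.charpoly).eq_prod_roots_of_monic S.charpoly_monic] at hq
  have h := Polynomial.aeval_eq_zero_of_dvd_aeval_eq_zero hq (Matrix.aeval_self_charpoly S)
  simp [sub_eq_zero] at h
  rw [← sq, h]

theorem aux_final (m : ℕ) (hm : Odd m) (Γ : Type) [Group Γ] [Finite Γ]
    (φ φ' : Γ →* Matrix (Fin m) (Fin m) ℂ)
    (hφ : ∀ γ, memSO m (φ γ)) (hφ' : ∀ γ, memSO m (φ' γ))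
    (htr : ∀ γ, (φ γ).trace = (φ' γ).trace) :
    ∃ g : Matrix (Fin m) (Fin m) ℂ, memSO m g ∧ ∀ γ : Γ, φ' γ = g * φ γ * g⁻¹ := by
  let L : Matrix (Fin m) (Fin m) ℂ →* ((Fin m → ℂ) →ₗ[ℂ] (Fin m → ℂ)) :=
    (Matrix.toLinAlgEquiv' : Matrix (Fin m) (Fin m) ℂ ≃ₐ[ℂ] _).toAlgHom.toRingHom.toMonoidHom
  have hL : ∀ M v, L M v = M *ᵥ v := fun M v => rfl
  have hLt : ∀ M, LinearMap.trace ℂ _ (L M) = M.trace := fun M => Matrix.trace_toLin'_eq M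
  obtain ⟨e, he⟩ := aux_rep (L.comp φ) (L.comp φ') (fun γ => by
    rw [MonoidHom.comp_apply, MonoidHom.comp_apply, hLt, hLt, htr])
  set g := LinearMap.toMatrix' (e : (Fin m → ℂ) →ₗ[ℂ] (Fin m → ℂ))
  have hge : ∀ v, g *ᵥ v = e v := fun v => LinearMap.toMatrix'_mulVec _ _
  have hgdet : IsUnit g.det := by
    rw [LinearMap.det_toMatrix']
    exact LinearEquiv.isUnit_det' e
  have hg : ∀ γ, g * φ γ = φ' γ * g := fun γ => by
    apply Matrix.toLin'.injective
    refine LinearMap.ext fun v => ?_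
    simp only [Matrix.toLin'_apply, ← Matrix.mulVec_mulVec, hge]
    exact he γ v
  set S := gᵀ * g with hSdef
  have hSdet : IsUnit S.det := by simp [hSdef, hgdet.ne_zero]
  have hSt : Sᵀ = S := by simp [hSdef]
  have hcomm : ∀ γ, Commute (φ γ) S := fun γ => by
    have h1 : (φ γ)ᵀ * S * φ γ = S := by
      calc (φ γ)ᵀ * S * φ γ = (g * φ γ)ᵀ * (g * φ γ) := by
            rw [hSdef, Matrix.transpose_mul]; simp only [Matrix.mul_assoc]
        _ = gᵀ * ((φ' γ)ᵀ * φ' γ) * g := by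
            rw [hg, Matrix.transpose_mul]; simp only [Matrix.mul_assoc]
        _ = S := by rw [(hφ' γ).1, Matrix.mul_one]
    have h2 : φ γ * (φ γ)ᵀ = 1 := mul_eq_one_comm.mp (hφ γ).1
    calc φ γ * S = φ γ * ((φ γ)ᵀ * S * φ γ) := by rw [h1]
      _ = (φ γ * (φ γ)ᵀ) * (S * φ γ) := by simp only [Matrix.mul_assoc]
      _ = S * φ γ := by rw [h2, Matrix.one_mul]
  obtain ⟨q, hq⟩ := aux_sqrt S hSdet
  set P := aeval S q
  have hPdet : IsUnit P.det := by
    rw [← hq, Matrix.det_mul] at hSdet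
    exact isUnit_of_mul_isUnit_left hSdet
  have hPt : Pᵀ = P := by
    have hall : ∀ p : ℂ[X], (aeval S p)ᵀ = aeval S p := fun p => by
      induction p using Polynomial.induction_on' with
      | add a b ha hb => rw [map_add, Matrix.transpose_add, ha, hb]
      | monomial n a =>
        rw [Polynomial.aeval_monomial, ← Algebra.smul_def, Matrix.transpose_smul,
          Matrix.transpose_pow, hSt]
    exact hall q
  have hPc : ∀ γ, P * φ γ = φ γ * P := fun γ => by
    have hall : ∀ p : ℂ[X], Commute (aeval S p) (φ γ) := fun p => by
      induction p using Polynomial.induction_on' with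
      | add a b ha hb => rw [map_add]; exact ha.add_left hb
      | monomial n a =>
        rw [Polynomial.aeval_monomial, ← Algebra.smul_def]
        exact ((hcomm γ).symm.pow_left n).smul_left a
    exact hall q
  have hPP : P * P⁻¹ = 1 := Matrix.mul_nonsing_inv P hPdet
  have hPP' : P⁻¹ * P = 1 := Matrix.nonsing_inv_mul P hPdet
  set h := g * P⁻¹ with hh
  have hor : hᵀ * h = 1 := by
    calc hᵀ * h = P⁻¹ * S * P⁻¹ := by
          rw [hh, hSdef, Matrix.transpose_mul, Matrix.transpose_nonsing_inv, hPt]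
          simp only [Matrix.mul_assoc]
      _ = (P⁻¹ * P) * (P * P⁻¹) := by rw [← hq]; simp only [Matrix.mul_assoc]
      _ = 1 := by rw [hPP, hPP', Matrix.one_mul]
  have hor' : h * hᵀ = 1 := mul_eq_one_comm.mp hor
  have hint : ∀ γ, h * φ γ = φ' γ * h := fun γ => by
    have h1 : P⁻¹ * φ γ = φ γ * P⁻¹ := by
      calc P⁻¹ * φ γ = P⁻¹ * (φ γ * P) * P⁻¹ := by
            rw [Matrix.mul_assoc, Matrix.mul_assoc, hPP, Matrix.mul_one]
        _ = (P⁻¹ * P) * φ γ * P⁻¹ := by rw [← hPc]; simp only [Matrix.mul_assoc]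
        _ = _ := by rw [hPP', Matrix.one_mul]
    rw [hh, Matrix.mul_assoc, h1, ← Matrix.mul_assoc, hg, Matrix.mul_assoc]
  have hconj : ∀ k : Matrix (Fin m) (Fin m) ℂ, kᵀ * k = 1 → (∀ γ, k * φ γ = φ' γ * k) →
      ∀ γ, φ' γ = k * φ γ * k⁻¹ := fun k hk hk' γ => by
    rw [Matrix.inv_eq_left_inv hk, hk', Matrix.mul_assoc, mul_eq_one_comm.mp hk, Matrix.mul_one]
  have hdet : h.det * h.det = 1 := by
    simpa using congrArg Matrix.det hor
  rcases mul_self_eq_one_iff.mp hdet with h1 | h1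
  · exact ⟨h, ⟨hor, h1⟩, hconj h hor hint⟩
  · have hor2 : (-h)ᵀ * (-h) = 1 := by simpa using hor
    refine ⟨-h, ⟨hor2, ?_⟩, hconj _ hor2 fun γ => by simp [hint]⟩
    rw [Matrix.det_neg, h1]
    simp [hm.neg_one_pow]

/-- For every `n ≥ 1`, the complex odd special orthogonal group `SO_{2n+1}(ℂ)` is
acceptable: any two pointwise (locally) conjugate homomorphisms from a finite group into
`SO_{2n+1}(ℂ)` are globally conjugate.  (Group homomorphisms into `SO_{2n+1}(ℂ)` are
encoded as monoid homomorphisms into the multiplicative monoid of matrices landing in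
`SO_{2n+1}(ℂ)`.) -/
theorem statement12 (n : ℕ) (hn : 1 ≤ n) (Γ : Type) [Group Γ] [Finite Γ]
    (φ φ' : Γ →* Matrix (Fin (2 * n + 1)) (Fin (2 * n + 1)) ℂ)
    (hφ : ∀ γ, memSO (2 * n + 1) (φ γ)) (hφ' : ∀ γ, memSO (2 * n + 1) (φ' γ))
    (hloc : ∀ γ : Γ, ∃ g : Matrix (Fin (2 * n + 1)) (Fin (2 * n + 1)) ℂ,
      memSO (2 * n + 1) g ∧ φ' γ = g * φ γ * g⁻¹) :
    ∃ g : Matrix (Fin (2 * n + 1)) (Fin (2 * n + 1)) ℂ,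
      memSO (2 * n + 1) g ∧ ∀ γ : Γ, φ' γ = g * φ γ * g⁻¹ := by
  refine aux_final (2 * n + 1) ⟨n, rfl⟩ Γ φ φ' hφ hφ' fun γ => ?_
  obtain ⟨g, hg, h⟩ := hloc γ
  rw [h, Matrix.inv_eq_left_inv hg.1, Matrix.trace_mul_comm, ← Matrix.mul_assoc, hg.1,
    Matrix.one_mul]

end
end
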